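/- Let A be a nonempty subset of a field F and let c ∈ F \ {0}. Then A is a Sidon set for the binary form x₁ + cx₂ if and only if A is a Sidon set for the binary form x₁ + (1/c)x₂. -/

import Mathlib

/-!
Exchanging the two variables of a binary form, or multiplying the form by a unit, does not change
its Sidon sets. Exchanging the variables of `x₁ + c x₂` gives `c x₁ + x₂`, which is `c` times
`x₁ + c⁻¹ x₂`.
-/

/-- `A` is a Sidon set for the binary linear form `a x₁ + b x₂`: the form takes distinct values at
distinct points of `A × A`. The coefficients may lie in any type acting on the ambient space, and
`A` may be empty. -/
def IsSidonFor {R M : Type*} [Add M] [SMul R M] (a b : R) (A : Set M) : Prop :=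
  Set.InjOn (fun x : M × M => a • x.1 + b • x.2) (A ×ˢ A)

namespace IsSidonFor

variable {R M : Type*}

theorem one_left_iff [Monoid R] [Add M] [MulAction R M] {b : R} {A : Set M} :
    IsSidonFor 1 b A ↔
      ∀ a₁ ∈ A, ∀ a₂ ∈ A, ∀ a₁' ∈ A, ∀ a₂' ∈ A,
        a₁ + b • a₂ = a₁' + b • a₂' → a₁ = a₁' ∧ a₂ = a₂' := by
  simp only [IsSidonFor, Set.InjOn, Prod.forall, Set.mem_prod, and_imp, one_smul, Prod.mk.injEq]
  exact ⟨fun h a₁ h₁ a₂ h₂ a₁' h₁' a₂' h₂' => h a₁ a₂ h₁ h₂ a₁' a₂' h₁' h₂',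
    fun h a₁ a₂ h₁ h₂ a₁' a₂' h₁' h₂' => h a₁ h₁ a₂ h₂ a₁' h₁' a₂' h₂'⟩

protected theorem swap [AddCommMagma M] [SMul R M] {a b : R} {A : Set M}
    (h : IsSidonFor a b A) : IsSidonFor b a A := by
  intro x hx y hy hxy
  refine Prod.swap_injective (h hx.symm hy.symm ?_)
  simpa only [Prod.fst_swap, Prod.snd_swap, add_comm] using hxy

protected theorem comm [AddCommMagma M] [SMul R M] {a b : R} {A : Set M} :
    IsSidonFor a b A ↔ IsSidonFor b a A :=
  ⟨.swap, .swap⟩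

theorem units_mul_iff [Monoid R] [AddMonoid M] [DistribMulAction R M] (u : Rˣ) {a b : R}
    {A : Set M} : IsSidonFor (u * a) (u * b) A ↔ IsSidonFor a b A := by
  simp only [IsSidonFor, Set.InjOn, mul_smul, ← smul_add, ← Units.smul_def, smul_left_cancel_iff]

end IsSidonFor

theorem sidon_iff_sidon_inv_general {R M : Type*} [Monoid R] [AddCommMonoid M]
    [DistribMulAction R M] (A : Set M) (u : Rˣ) :
    IsSidonFor 1 (u : R) A ↔ IsSidonFor 1 (↑u⁻¹ : R) A :=
  calc
    IsSidonFor 1 (u : R) A ↔ IsSidonFor (u : R) 1 A := IsSidonFor.comm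
    _ ↔ IsSidonFor (u * 1 : R) (u * ↑u⁻¹) A := by rw [mul_one, Units.mul_inv]
    _ ↔ IsSidonFor 1 (↑u⁻¹ : R) A := IsSidonFor.units_mul_iff u

/-- A nonempty subset `A` of a field is a Sidon set for the binary form
`x₁ + cx₂` (with `c ≠ 0`) if and only if it is a Sidon set for `x₁ + (1/c)x₂`. -/
theorem sidon_iff_sidon_inv
    (F : Type*) [Field F] (A : Set F) (hA : A.Nonempty) (c : F) (hc : c ≠ 0) :
    (∀ a₁ ∈ A, ∀ a₂ ∈ A, ∀ a₁' ∈ A, ∀ a₂' ∈ A,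
        a₁ + c * a₂ = a₁' + c * a₂' → a₁ = a₁' ∧ a₂ = a₂') ↔
      (∀ a₁ ∈ A, ∀ a₂ ∈ A, ∀ a₁' ∈ A, ∀ a₂' ∈ A,
        a₁ + c⁻¹ * a₂ = a₁' + c⁻¹ * a₂' → a₁ = a₁' ∧ a₂ = a₂') := by
  simpa only [IsSidonFor.one_left_iff, smul_eq_mul, Units.val_inv_eq_inv_val, Units.val_mk0] using
    sidon_iff_sidon_inv_general A (Units.mk0 c hc)
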